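/- Let 𝒳, 𝒴 be Polish spaces, μ ∈ 𝒫(𝒳), ν ∈ 𝒫(𝒴). (i) Let X, Y be random variables on a probability space with filtration (ℱ_t)_{t=1}^2 such that X is ℱ₁-measurable, Y is ℱ₂-measurable, X ∼ μ and Y ∼ ν. Then the law P^X of (X, ℒ(Y|ℱ₁)) belongs to Λ(μ,ν) and satisfies E[F(X, ℒ(Y|ℱ₁))] = ∫ F(x,p) P^X(dx,dp) for every measurable F : 𝒳 × 𝒫(𝒴) → ℝ̄ for which the left-hand side is well-defined. (ii) Conversely, for every P ∈ Λ(μ,ν) there exists a filtered probability space carrying random variables X ∼ μ (ℱ₁-measurable) and Y ∼ ν such that the law of (X, ℒ(Y|ℱ₁)) equals P. -/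

import Mathlib

open MeasureTheory Set Filter
open scoped ENNReal NNReal Topology RealInnerProductSpace

noncomputable section

namespace WOT

/-- The set of couplings of `μ` and `ν`. -/
def Couplings {X Y : Type*} [MeasurableSpace X] [MeasurableSpace Y]
    (μ : Measure X) (ν : Measure Y) : Set (Measure (X × Y)) :=
  {π | π.map Prod.fst = μ ∧ π.map Prod.snd = ν}

/-- `K` is a disintegration of `π` with respect to its first marginal `μ`. -/
def IsDisint {X Y : Type*} [MeasurableSpace X] [MeasurableSpace Y]
    (π : Measure (X × Y)) (μ : Measure X) (K : X → Measure Y) : Prop :=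
  Measurable K ∧ (∀ x, IsProbabilityMeasure (K x)) ∧
    ∀ s : Set (X × Y), MeasurableSet s → π s = ∫⁻ x, K x (Prod.mk x ⁻¹' s) ∂μ

/-- The intensity `I(Q)` of a measure on measures. -/
def intensity {Y : Type*} [MeasurableSpace Y] (Q : Measure (Measure Y)) : Measure Y :=
  Q.join

/-- The intensity map `Î`. -/
def intensityHat {X Y : Type*} [MeasurableSpace X] [MeasurableSpace Y]
    (P : Measure (X × Measure Y)) : Measure (X × Y) :=
  P.bind fun xp => (Measure.dirac xp.1).prod xp.2

/-- `Λ(μ,ν)`, the set of probability measures on `X × 𝒫(Y)` whose intensity is a coupling. -/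
def Lambda {X Y : Type*} [MeasurableSpace X] [MeasurableSpace Y]
    (μ : Measure X) (ν : Measure Y) : Set (Measure (X × Measure Y)) :=
  {P | IsProbabilityMeasure P ∧ (∀ᵐ xp ∂P, IsProbabilityMeasure xp.2) ∧
    intensityHat P ∈ Couplings μ ν}

/-- Finite `r`-th moment. -/
def FinMom {X : Type*} [MeasurableSpace X] [PseudoMetricSpace X]
    (r : ℝ) (x₀ : X) (μ : Measure X) : Prop :=
  ∫⁻ x, ENNReal.ofReal (dist x x₀ ^ r) ∂μ < ⊤

/-- The growth class `Φ_r`. -/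
def PhiR {X : Type*} [PseudoMetricSpace X] (r : ℝ) (x₀ : X) : Set (X → ℝ) :=
  {φ | Continuous φ ∧ ∃ K : ℝ, ∀ x, |φ x| ≤ K * (1 + dist x x₀ ^ r)}

/-- The `r`-Wasserstein distance (valued in `ℝ≥0∞`). -/
def Wr {Y : Type*} [MeasurableSpace Y] [PseudoMetricSpace Y]
    (r : ℝ) (p q : Measure Y) : ℝ≥0∞ :=
  ⨅ π ∈ Couplings p q, (∫⁻ z : Y × Y, ENNReal.ofReal (dist z.1 z.2 ^ r) ∂π) ^ (1 / r)

/-- `𝒫_r(Y)`: probability measures with finite `r`-th moment. -/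
def Pr {Y : Type*} [MeasurableSpace Y] [PseudoMetricSpace Y] (r : ℝ) (y₀ : Y) :
    Set (Measure Y) :=
  {p | IsProbabilityMeasure p ∧ FinMom r y₀ p}

/-- `𝒫_r(𝒫_r(Y))`: probability measures on `𝒫_r(Y)` with finite `r`-th moment w.r.t. `𝒲_r`. -/
def PrP {Y : Type*} [MeasurableSpace Y] [PseudoMetricSpace Y] (r : ℝ) (y₀ : Y) :
    Set (Measure (Measure Y)) :=
  {Q | IsProbabilityMeasure Q ∧ (∀ᵐ p ∂Q, p ∈ Pr r y₀) ∧
    ∫⁻ p, Wr r p (Measure.dirac y₀) ^ r ∂Q < ⊤}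

/-- The positive part of an extended real, valued in `ℝ≥0∞`. -/
def epos (e : EReal) : ℝ≥0∞ := if e = ⊤ then ⊤ else ENNReal.ofReal e.toReal

/-- Extended-real integral: positive part minus negative part (with value `⊥` when
both parts are infinite, i.e. when the integral is not well-defined). -/
def eInt {X : Type*} [MeasurableSpace X] (f : X → EReal) (μ : Measure X) : EReal :=
  ((∫⁻ x, epos (f x) ∂μ : ℝ≥0∞) : EReal) - ((∫⁻ x, epos (-(f x)) ∂μ : ℝ≥0∞) : EReal)

/-- Extended-real integral with the opposite (`⊤`) convention for ill-defined integrals. -/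
def eIntU {X : Type*} [MeasurableSpace X] (f : X → EReal) (μ : Measure X) : EReal :=
  -eInt (fun x => -(f x)) μ

/-- The extended-real integral is well-defined. -/
def eIntWellDef {X : Type*} [MeasurableSpace X] (f : X → EReal) (μ : Measure X) : Prop :=
  (∫⁻ x, epos (f x) ∂μ ≠ ⊤) ∨ (∫⁻ x, epos (-(f x)) ∂μ ≠ ⊤)

/-- Convergence in the `r`-Wasserstein distance. -/
def WrTendsto {Y : Type*} [MeasurableSpace Y] [PseudoMetricSpace Y]
    (r : ℝ) (ps : ℕ → Measure Y) (p : Measure Y) : Prop :=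
  Tendsto (fun n => Wr r (ps n) p) atTop (nhds 0)

/-- (Sequential) lower semicontinuity on `𝒫_r(Y)` w.r.t. `𝒲_r`. -/
def LscWr1 {Y : Type*} [MeasurableSpace Y] [PseudoMetricSpace Y]
    (r : ℝ) (y₀ : Y) (G : Measure Y → EReal) : Prop :=
  ∀ (p : Measure Y) (ps : ℕ → Measure Y), p ∈ Pr r y₀ → (∀ n, ps n ∈ Pr r y₀) →
    WrTendsto r ps p → G p ≤ liminf (fun n => G (ps n)) atTop

/-- (Sequential) upper semicontinuity on `𝒫_r(Y)` w.r.t. `𝒲_r`. -/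
def UscWr1 {Y : Type*} [MeasurableSpace Y] [PseudoMetricSpace Y]
    (r : ℝ) (y₀ : Y) (G : Measure Y → EReal) : Prop :=
  ∀ (p : Measure Y) (ps : ℕ → Measure Y), p ∈ Pr r y₀ → (∀ n, ps n ∈ Pr r y₀) →
    WrTendsto r ps p → limsup (fun n => G (ps n)) atTop ≤ G p

/-- (Sequential) lower semicontinuity on `X × 𝒫_r(Y)` w.r.t. `d_X × 𝒲_r`. -/
def LscWr {X Y : Type*} [TopologicalSpace X] [MeasurableSpace Y] [PseudoMetricSpace Y]
    (r : ℝ) (y₀ : Y) (C : X × Measure Y → EReal) : Prop :=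
  ∀ (x : X) (xs : ℕ → X) (p : Measure Y) (ps : ℕ → Measure Y),
    p ∈ Pr r y₀ → (∀ n, ps n ∈ Pr r y₀) → Tendsto xs atTop (nhds x) → WrTendsto r ps p →
    C (x, p) ≤ liminf (fun n => C (xs n, ps n)) atTop

/-- (Sequential) continuity of a real-valued cost on `X × 𝒫_r(Y)` w.r.t. `d_X × 𝒲_r`. -/
def ContWr {X Y : Type*} [TopologicalSpace X] [MeasurableSpace Y] [PseudoMetricSpace Y]
    (r : ℝ) (y₀ : Y) (C : X × Measure Y → ℝ) : Prop :=
  ∀ (x : X) (xs : ℕ → X) (p : Measure Y) (ps : ℕ → Measure Y),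
    p ∈ Pr r y₀ → (∀ n, ps n ∈ Pr r y₀) → Tendsto xs atTop (nhds x) → WrTendsto r ps p →
    Tendsto (fun n => C (xs n, ps n)) atTop (nhds (C (x, p)))

/-- Convexity of an extended-real-valued function on a set of measures. -/
def EConvexOn {Y : Type*} [MeasurableSpace Y] (S : Set (Measure Y)) (G : Measure Y → EReal) :
    Prop :=
  ∀ p ∈ S, ∀ q ∈ S, ∀ t : ℝ≥0, t ≤ 1 →
    G ((t : ℝ≥0∞) • p + ((1 - t : ℝ≥0) : ℝ≥0∞) • q)
      ≤ ((t : ℝ) : EReal) * G p + (((1 - t : ℝ≥0) : ℝ) : EReal) * G q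

/-- The lower semicontinuous convex envelope (on `𝒫_r(Y)` w.r.t. `𝒲_r`). -/
def cvxEnvWr {Y : Type*} [MeasurableSpace Y] [PseudoMetricSpace Y]
    (r : ℝ) (y₀ : Y) (f : Measure Y → EReal) : Measure Y → EReal :=
  fun p => ⨆ G ∈ {G : Measure Y → EReal |
    LscWr1 r y₀ G ∧ EConvexOn (Pr r y₀) G ∧ ∀ q ∈ Pr r y₀, G q ≤ f q}, G p

/-- The cost `C̃(x,p) = inf {∫ C(x,q) Q(dq) : Q ∈ 𝒫_r(𝒫_r(Y)), I(Q) = p}`. -/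
def tildeC {X Y : Type*} [MeasurableSpace X] [MeasurableSpace Y] [PseudoMetricSpace Y]
    (r : ℝ) (y₀ : Y) (C : X × Measure Y → EReal) : X × Measure Y → EReal :=
  fun xp => ⨅ Q ∈ {Q | Q ∈ PrP r y₀ ∧ intensity Q = xp.2}, eInt (fun q => C (xp.1, q)) Q

/-- The barycenter of a measure on a normed space. -/
def bary {E : Type*} [NormedAddCommGroup E] [NormedSpace ℝ E] [MeasurableSpace E]
    (p : Measure E) : E :=
  ∫ y, y ∂p

/-- Convex order of measures. -/
def ConvexOrder {E : Type*} [NormedAddCommGroup E] [NormedSpace ℝ E] [MeasurableSpace E]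
    (ν' ν : Measure E) : Prop :=
  ∀ θ : E → ℝ, ConvexOn ℝ Set.univ θ →
    eInt (fun y => ((θ y : ℝ) : EReal)) ν' ≤ eInt (fun y => ((θ y : ℝ) : EReal)) ν

/-- The inf-convolution `R_C ψ`. -/
def RC {X Y : Type*} [MeasurableSpace Y] [PseudoMetricSpace Y]
    (r : ℝ) (y₀ : Y) (C : X × Measure Y → EReal) (ψ : Y → ℝ) : X → EReal :=
  fun x => ⨅ p ∈ Pr r y₀, (((-∫ y, ψ y ∂p : ℝ) : EReal) + C (x, p))

/-- `κ` is a regular conditional distribution of `Yv` given the sub-σ-algebra `m1`. -/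
def IsRCD {Ω Y : Type*} [MeasurableSpace Y] (m1 : MeasurableSpace Ω)
    (mΩ : MeasurableSpace Ω) (P : @Measure Ω mΩ) (Yv : Ω → Y) (κ : Ω → Measure Y) : Prop :=
  (∀ ω, IsProbabilityMeasure (κ ω)) ∧ Measurable[m1] κ ∧
    ∀ A : Set Y, MeasurableSet A → ∀ B : Set Ω, MeasurableSet[m1] B →
      P (B ∩ Yv ⁻¹' A) = ∫⁻ ω in B, κ ω A ∂P

end WOT

open WOT

universe u v

/-!
The intensity `Î` of the law of `(X, ℒ(Y|ℱ₁))` is the law of `(X, Y)`: on a rectangle this is the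
defining property of the conditional distribution, applied to an event `{X ∈ A}`. Conversely, given
`P ∈ Λ(μ,ν)`, draw `(X, p)` from `P`, then `Y` from `p`, and let `ℱ₁` be generated by `(X, p)`. Then
`ℒ(Y|ℱ₁) = p` almost surely, and the law of `(X, Y)` is again `Î(P)`. Since `p` is a probability
measure only almost surely, it is first replaced by an almost everywhere equal Markov kernel.
-/

open ProbabilityTheory

namespace WOT

section ExtendedIntegral

variable {α β : Type*} [MeasurableSpace α] [MeasurableSpace β]

lemma epos_eq_toENNReal : epos = EReal.toENNReal := rfl

lemma eInt_map {μ : Measure α} {T : α → β} {F : β → EReal}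
    (hF : AEMeasurable F (μ.map T)) (hT : AEMeasurable T μ) :
    eInt F (μ.map T) = eInt (fun a => F (T a)) μ := by
  have hF_neg : AEMeasurable (fun b => -F b) (μ.map T) := hF.neg
  simp only [eInt, epos_eq_toENNReal]
  rw [lintegral_map' hF.ereal_toENNReal hT, lintegral_map' hF_neg.ereal_toENNReal hT]

end ExtendedIntegral

section Intensity

variable {X Y : Type*} [MeasurableSpace X] [MeasurableSpace Y] {P : Measure (X × Measure Y)}

lemma exists_isMarkovKernel_ae_eq_snd [NeZero P] (hP : ∀ᵐ xp ∂P, IsProbabilityMeasure xp.2) :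
    ∃ κ : Kernel (X × Measure Y) Y, IsMarkovKernel κ ∧ ∀ᵐ xp ∂P, κ xp = xp.2 := by
  let sndKernel : Kernel (X × Measure Y) Y := ⟨Prod.snd, measurable_snd⟩
  obtain ⟨κ, hκ, hκ_markov⟩ :=
    Kernel.exists_ae_eq_isMarkovKernel (κ := sndKernel) hP (NeZero.ne P)
  exact ⟨κ, hκ_markov, hκ.mono fun _ h => h.symm⟩

lemma intensityHat_eq_map_compProd [SFinite P] {κ : Kernel (X × Measure Y) Y} [IsSFiniteKernel κ]
    (hκ : ∀ᵐ xp ∂P, κ xp = xp.2) :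
    intensityHat P = (P ⊗ₘ κ).map (Prod.map Prod.fst id) := by
  have hmeas : Measurable (Prod.map Prod.fst id : (X × Measure Y) × Y → X × Y) :=
    measurable_fst.prodMap measurable_id
  rw [Measure.compProd_eq_comp_prod, Measure.map_comp _ _ hmeas]
  refine Measure.bind_congr_right ?_
  filter_upwards [hκ] with xp hxp
  rw [Kernel.map_apply _ hmeas, Kernel.prod_apply, Kernel.id_apply,
    ← Measure.map_prod_map _ _ measurable_fst measurable_id, Measure.map_dirac' measurable_fst,
    Measure.map_id, hxp]

lemma intensityHat_prod [SFinite P] (hP : ∀ᵐ xp ∂P, IsProbabilityMeasure xp.2)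
    {A : Set X} {B : Set Y} (hA : MeasurableSet A) (hB : MeasurableSet B) :
    intensityHat P (A ×ˢ B) = ∫⁻ xp in Prod.fst ⁻¹' A, xp.2 B ∂P := by
  rcases eq_zero_or_neZero P with rfl | _
  · simp [intensityHat]
  obtain ⟨κ, _, hκ⟩ := exists_isMarkovKernel_ae_eq_snd hP
  calc intensityHat P (A ×ˢ B)
      = (P ⊗ₘ κ) ((Prod.fst ⁻¹' A) ×ˢ B) := by
        rw [intensityHat_eq_map_compProd hκ,
          Measure.map_apply (measurable_fst.prodMap measurable_id) (hA.prod hB)]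
        rfl
    _ = ∫⁻ xp in Prod.fst ⁻¹' A, κ xp B ∂P :=
        Measure.compProd_apply_prod (measurable_fst hA) hB
    _ = ∫⁻ xp in Prod.fst ⁻¹' A, xp.2 B ∂P :=
        lintegral_congr_ae <| ae_restrict_of_ae <| hκ.mono fun xp hxp => by simp only [hxp]

end Intensity

section LawOfProcess

variable {Ω X Y : Type*} [MeasurableSpace X] [MeasurableSpace Y] {m1 mΩ : MeasurableSpace Ω}
  {P : Measure Ω} {Xv : Ω → X} {Yv : Ω → Y} {κ : Ω → Measure Y}

lemma IsRCD.ae_map_isProbabilityMeasure_snd (hκ : IsRCD m1 mΩ P Yv κ) (hm : m1 ≤ mΩ)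
    (hX : Measurable Xv) :
    ∀ᵐ xp ∂P.map (fun ω => (Xv ω, κ ω)), IsProbabilityMeasure xp.2 :=
  (ae_map_iff (hX.prodMk (hκ.2.1.mono hm le_rfl)).aemeasurable
    (measurable_snd ProbabilityMeasure.measurableSet_isProbabilityMeasure)).2
    (Eventually.of_forall hκ.1)

lemma IsRCD.intensityHat_map_prodMk [IsFiniteMeasure P] (hκ : IsRCD m1 mΩ P Yv κ) (hm : m1 ≤ mΩ)
    (hX : Measurable[m1] Xv) (hY : Measurable Yv) :
    intensityHat (P.map fun ω => (Xv ω, κ ω)) = P.map fun ω => (Xv ω, Yv ω) := by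
  have hX' : Measurable Xv := hX.mono hm le_rfl
  have hXκ : Measurable fun ω => (Xv ω, κ ω) := hX'.prodMk (hκ.2.1.mono hm le_rfl)
  refine (Measure.ext_prod fun {A B} hA hB => ?_).symm
  calc P.map (fun ω => (Xv ω, Yv ω)) (A ×ˢ B)
      = P (Xv ⁻¹' A ∩ Yv ⁻¹' B) := by
        rw [Measure.map_apply (hX'.prodMk hY) (hA.prod hB), mk_preimage_prod]
    _ = ∫⁻ ω in Xv ⁻¹' A, κ ω B ∂P := hκ.2.2 B hB _ (hX hA)
    _ = ∫⁻ xp in Prod.fst ⁻¹' A, xp.2 B ∂P.map (fun ω => (Xv ω, κ ω)) :=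
        (setLIntegral_map (measurable_fst hA)
          ((Measure.measurable_coe hB).comp measurable_snd) hXκ).symm
    _ = intensityHat (P.map fun ω => (Xv ω, κ ω)) (A ×ˢ B) :=
        (intensityHat_prod (hκ.ae_map_isProbabilityMeasure_snd hm hX') hA hB).symm

lemma IsRCD.map_prodMk_mem_Lambda [IsProbabilityMeasure P] (hκ : IsRCD m1 mΩ P Yv κ)
    (hm : m1 ≤ mΩ) (hX : Measurable[m1] Xv) (hY : Measurable Yv) :
    P.map (fun ω => (Xv ω, κ ω)) ∈ Lambda (P.map Xv) (P.map Yv) := by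
  have hX' : Measurable Xv := hX.mono hm le_rfl
  refine ⟨Measure.isProbabilityMeasure_map (hX'.prodMk (hκ.2.1.mono hm le_rfl)).aemeasurable,
    hκ.ae_map_isProbabilityMeasure_snd hm hX', ?_⟩
  rw [hκ.intensityHat_map_prodMk hm hX hY]
  exact ⟨Measure.fst_map_prodMk hY, Measure.snd_map_prodMk hX'⟩

end LawOfProcess

section CanonicalProcess

lemma isRCD_compProd {α β : Type*} [MeasurableSpace α] [MeasurableSpace β] (P : Measure α)
    [SFinite P] (κ : Kernel α β) [IsMarkovKernel κ] :
    IsRCD (MeasurableSpace.comap Prod.fst inferInstance) inferInstance (P ⊗ₘ κ) Prod.snd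
      (fun ω => κ ω.1) := by
  refine ⟨fun ω => inferInstance, κ.measurable.comp (comap_measurable Prod.fst), ?_⟩
  rintro A hA _ ⟨B, hB, rfl⟩
  calc (P ⊗ₘ κ) (B ×ˢ A)
      = ∫⁻ a in B, κ a A ∂(P ⊗ₘ κ).fst := by
        rw [Measure.compProd_apply_prod hB hA, Measure.fst_compProd]
    _ = ∫⁻ ω in Prod.fst ⁻¹' B, κ ω.1 A ∂(P ⊗ₘ κ) :=
        setLIntegral_map hB (κ.measurable_coe hA) measurable_fst

variable {X Y : Type*} [MeasurableSpace X] [MeasurableSpace Y] {P : Measure (X × Measure Y)}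
  [SFinite P] {κ : Kernel (X × Measure Y) Y}

lemma map_fst_intensityHat_eq [IsSFiniteKernel κ] (hκ : ∀ᵐ xp ∂P, κ xp = xp.2) :
    (intensityHat P).map Prod.fst = (P ⊗ₘ κ).map fun ω => ω.1.1 := by
  rw [intensityHat_eq_map_compProd hκ,
    Measure.map_map measurable_fst (measurable_fst.prodMap measurable_id)]
  rfl

lemma map_snd_intensityHat_eq [IsSFiniteKernel κ] (hκ : ∀ᵐ xp ∂P, κ xp = xp.2) :
    (intensityHat P).map Prod.snd = (P ⊗ₘ κ).map Prod.snd := by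
  rw [intensityHat_eq_map_compProd hκ,
    Measure.map_map measurable_snd (measurable_fst.prodMap measurable_id)]
  rfl

lemma map_compProd_prodMk_kernel_eq [IsMarkovKernel κ] (hκ : ∀ᵐ xp ∂P, κ xp = xp.2) :
    (P ⊗ₘ κ).map (fun ω => (ω.1.1, κ ω.1)) = P :=
  calc (P ⊗ₘ κ).map (fun ω => (ω.1.1, κ ω.1))
      = (P ⊗ₘ κ).fst.map fun xp => (xp.1, κ xp) :=
        (Measure.map_map (measurable_fst.prodMk κ.measurable) measurable_fst).symm
    _ = P.map fun xp => (xp.1, κ xp) := by rw [Measure.fst_compProd]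
    _ = P.map id := Measure.map_congr <| hκ.mono fun xp hxp => by simp only [hxp, id]
    _ = P := Measure.map_id

end CanonicalProcess

end WOT

theorem statement3_general {X : Type u} {Y : Type v} [MeasurableSpace X] [MeasurableSpace Y]
    (μ : Measure X) (ν : Measure Y)
    {Ω : Type*} {m1 m2 : MeasurableSpace Ω} (hm : m1 ≤ m2)
    (P : Measure Ω) [IsProbabilityMeasure P]
    (Xv : Ω → X) (Yv : Ω → Y) (κ : Ω → Measure Y)
    (hX : Measurable[m1] Xv) (hY : Measurable Yv)
    (hXlaw : P.map Xv = μ) (hYlaw : P.map Yv = ν) (hκ : IsRCD m1 m2 P Yv κ) :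
    (P.map (fun ω => (Xv ω, κ ω)) ∈ Lambda μ ν ∧
      ∀ F : X × Measure Y → EReal, Measurable F →
        eIntWellDef (fun ω => F (Xv ω, κ ω)) P →
        eInt (fun ω => F (Xv ω, κ ω)) P = eInt F (P.map fun ω => (Xv ω, κ ω))) ∧
    (∀ P' ∈ Lambda μ ν, ∃ (Ω' : Type (max u v)) (m1' mΩ' : MeasurableSpace Ω'), m1' ≤ mΩ' ∧
      ∃ (Pm : Measure Ω') (Xv' : Ω' → X) (Yv' : Ω' → Y) (κ' : Ω' → Measure Y),
        IsProbabilityMeasure Pm ∧ Measurable[m1'] Xv' ∧ Measurable Yv' ∧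
        Pm.map Xv' = μ ∧ Pm.map Yv' = ν ∧ IsRCD m1' mΩ' Pm Yv' κ' ∧
        Pm.map (fun ω => (Xv' ω, κ' ω)) = P') := by
  subst hXlaw hYlaw
  refine ⟨⟨hκ.map_prodMk_mem_Lambda hm hX hY, fun F hF _ => ?_⟩, ?_⟩
  · have hXκ : Measurable fun ω => (Xv ω, κ ω) := (hX.prodMk hκ.2.1).mono hm le_rfl
    exact (eInt_map hF.aemeasurable hXκ.aemeasurable).symm
  · rintro P' ⟨_, hP', hfst, hsnd⟩
    obtain ⟨η, _, hη⟩ := exists_isMarkovKernel_ae_eq_snd hP'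
    exact ⟨(X × Measure Y) × Y, MeasurableSpace.comap Prod.fst inferInstance, inferInstance,
      measurable_fst.comap_le, P' ⊗ₘ η, fun ω => ω.1.1, Prod.snd, fun ω => η ω.1,
      inferInstance, measurable_fst.comp (comap_measurable Prod.fst), measurable_snd,
      (map_fst_intensityHat_eq hη).symm.trans hfst, (map_snd_intensityHat_eq hη).symm.trans hsnd,
      isRCD_compProd P' η, map_compProd_prodMk_kernel_eq hη⟩

/-- correspondence between one-step filtered processes and elements of `Λ(μ,ν)`
(Lemma `process vs Lambda`). -/
theorem statement3 {X : Type u} {Y : Type v}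
    [MeasurableSpace X] [MetricSpace X] [CompleteSpace X] [SecondCountableTopology X]
    [BorelSpace X]
    [MeasurableSpace Y] [MetricSpace Y] [CompleteSpace Y] [SecondCountableTopology Y]
    [BorelSpace Y]
    (μ : Measure X) (ν : Measure Y) [IsProbabilityMeasure μ] [IsProbabilityMeasure ν]
    -- part (i): data of a filtered probability space with a one-step process
    (Ω : Type (max u v)) (m1 m2 : MeasurableSpace Ω) (hm : m1 ≤ m2)
    (P : @Measure Ω m2) (hP : @IsProbabilityMeasure Ω m2 P)
    (Xv : Ω → X) (Yv : Ω → Y) (κ : Ω → Measure Y)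
    (hX : Measurable[m1] Xv) (hY : Measurable[m2] Yv)
    (hXlaw : @Measure.map Ω X m2 _ Xv P = μ) (hYlaw : @Measure.map Ω Y m2 _ Yv P = ν)
    (hκ : IsRCD m1 m2 P Yv κ) :
    -- part (i): the law `P^𝕏` of `(X, ℒ(Y|ℱ₁))` belongs to `Λ(μ,ν)` and computes
    -- expectations of all measurable functionals of `(X, ℒ(Y|ℱ₁))`
    (@Measure.map Ω (X × Measure Y) m2 _ (fun ω => (Xv ω, κ ω)) P ∈ Lambda μ ν ∧
      ∀ F : X × Measure Y → EReal, Measurable F →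
        @eIntWellDef Ω m2 (fun ω => F (Xv ω, κ ω)) P →
        @eInt Ω m2 (fun ω => F (Xv ω, κ ω)) P
          = eInt F (@Measure.map Ω (X × Measure Y) m2 _ (fun ω => (Xv ω, κ ω)) P)) ∧
    -- part (ii): every `P' ∈ Λ(μ,ν)` arises this way
    (∀ P' ∈ Lambda μ ν, ∃ (Ω' : Type (max u v)) (m1' mΩ' : MeasurableSpace Ω'), m1' ≤ mΩ' ∧
      ∃ (Pm : @Measure Ω' mΩ') (Xv' : Ω' → X) (Yv' : Ω' → Y) (κ' : Ω' → Measure Y),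
        @IsProbabilityMeasure Ω' mΩ' Pm ∧ Measurable[m1'] Xv' ∧ Measurable[mΩ'] Yv' ∧
        @Measure.map Ω' X mΩ' _ Xv' Pm = μ ∧ @Measure.map Ω' Y mΩ' _ Yv' Pm = ν ∧
        IsRCD m1' mΩ' Pm Yv' κ' ∧
        @Measure.map Ω' (X × Measure Y) mΩ' _ (fun ω => (Xv' ω, κ' ω)) Pm = P') := by
  exact statement3_general μ ν hm P Xv Yv κ hX hY hXlaw hYlaw hκ
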